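/- The split ıquantum group U = U^ı(sl_{n+1}) satisfies the integral condition (IC): for every word w, the element B_w lies in the ℤ[q, q^{-1}]-span of {B_g : g a good word with g ≼ w}. -/

import Mathlib

/-!
Call a word normal if it is a concatenation of segments `v_a v_{a+1} ⋯ v_{b-1}` that are
lexicographically nonincreasing from left to right. The proof shows two things.

*Words that are not normal reduce integrally* (`red_or_normal`). A word that is not normal has a
factor of one of three kinds: `v_i v_j` with `i + 1 < j` (`red_comm`); a segment `v_a ⋯ v_b`
followed by `v_a ⋯ v_{b+1}` (`red_pair`); a segment `v_a ⋯ v_b` with `a < b` followed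
by `v_{a+1}` (`red_back`). For each of them the product of generators is a `ℤ[q, q⁻¹]`-combination of products
along `≺`-smaller words. Apart from the defining relations this uses the consequence
`u x y x = x u x y - x y x u + y x u x` of two Serre relations for commuting `u` and `y`
(`key_identity`), whose coefficients are integers although `q + q⁻¹` has to be cancelled once.

*Normal words are good* (`isGood_of_isNormal`). The generators act on the tensor powers of the
natural representation; on a completed sum of these, functions on lists of integers, `B_i` is the
operator `op i`. Its matrix coefficients are positive at `q = 1`, so the coefficient of `B_u`
between two lists is nonzero exactly if `u` labels a lattice path from one to the other. Given a
normal word `w`, take the list of starting points and the list of end points of its segments. The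
sum of the entries has to grow by the length of `w`, so shorter words label no path, and words of
the same length label one only if they are shuffles of the segments of `w`. Among these shuffles
`w` is the lexicographically largest (`Shuf.le_flat`), hence the `≺`-smallest. This matrix
coefficient therefore vanishes on `B_u` for `u ≺ w` but not on `B_w`.

As only finitely many words lie `≺`-below a given one, repeated reduction ends in an integral
combination of products along normal, hence good, words.
-/

/-- The lexicographic order on words over the alphabet `v_0 < v_1 < ⋯ < v_{n-1}`
(indexed by `Fin n`), in which a word is smaller than any word having it as a proper prefix. -/
def LexLt {n : ℕ} (x y : List (Fin n)) : Prop := List.Lex (· < ·) x y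

/-- The order `≺` : `x ≺ y` iff `ℓ(x) < ℓ(y)`, or `ℓ(x) = ℓ(y)` and `x > y` lexicographically. -/
def PrecLt {n : ℕ} (x y : List (Fin n)) : Prop :=
  x.length < y.length ∨ (x.length = y.length ∧ LexLt y x)

/-- The order `≼` : `x ≼ y` iff `x ≺ y` or `x = y`. -/
def PrecLe {n : ℕ} (x y : List (Fin n)) : Prop := PrecLt x y ∨ x = y

/-- A nonempty word is Lyndon if it is lexicographically strictly smaller than every proper
nonempty suffix of itself. -/
def IsLyndon {n : ℕ} (l : List (Fin n)) : Prop :=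
  l ≠ [] ∧ ∀ k : ℕ, 0 < k → k < l.length → LexLt l (l.drop k)

/-- `B_w = b_{i_1} ⋯ b_{i_k} ∈ R` for the word `w = v_{i_1} ⋯ v_{i_k}` (`B_w = 1` for `w = []`). -/
def Bword {n : ℕ} {R : Type*} [Monoid R] (b : Fin n → R) (w : List (Fin n)) : R :=
  (w.map b).prod

/-- A word `g` is good if `B_g` does not lie in the `K`-linear span of the `B_w` with `w ≺ g`. -/
def IsGood (K : Type*) {n : ℕ} {R : Type*} [Field K] [Ring R] [Algebra K R]
    (b : Fin n → R) (g : List (Fin n)) : Prop :=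
  Bword b g ∉ Submodule.span K (Bword b '' {w | PrecLt w g})

/-- The defining relations of the split ıquantum group `U^ı(sl_{n+1})` of type `A_n` with
parameters `ξ_i = q⁻¹` : `B_iB_j = B_jB_i` for `|i-j| ≥ 2` and
`B_i²B_j - (q+q⁻¹) B_iB_jB_i + B_jB_i² = B_j` for `|i-j| = 1`. -/
inductive UiRel (n : ℕ) :
    FreeAlgebra (RatFunc ℚ) (Fin n) → FreeAlgebra (RatFunc ℚ) (Fin n) → Prop
  | comm (i j : Fin n) (h : (i : ℕ) + 1 < (j : ℕ)) :
      UiRel n (FreeAlgebra.ι (RatFunc ℚ) i * FreeAlgebra.ι (RatFunc ℚ) j)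
        (FreeAlgebra.ι (RatFunc ℚ) j * FreeAlgebra.ι (RatFunc ℚ) i)
  | serre (i j : Fin n) (h : (i : ℕ) + 1 = (j : ℕ) ∨ (j : ℕ) + 1 = (i : ℕ)) :
      UiRel n
        (FreeAlgebra.ι (RatFunc ℚ) i * FreeAlgebra.ι (RatFunc ℚ) i * FreeAlgebra.ι (RatFunc ℚ) j +
          FreeAlgebra.ι (RatFunc ℚ) j * FreeAlgebra.ι (RatFunc ℚ) i * FreeAlgebra.ι (RatFunc ℚ) i)
        (((RatFunc.X : RatFunc ℚ) + (RatFunc.X : RatFunc ℚ)⁻¹) • (FreeAlgebra.ι (RatFunc ℚ) i *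
            FreeAlgebra.ι (RatFunc ℚ) j * FreeAlgebra.ι (RatFunc ℚ) i) +
          FreeAlgebra.ι (RatFunc ℚ) j)

/-- The split ıquantum group `U = U^ı(sl_{n+1})` of type `A_n`, the quotient of the free
`ℚ(q)`-algebra on `B_1, …, B_n` by the defining relations. -/
abbrev Ui (n : ℕ) := RingQuot (UiRel n)

/-- The generators `B_1, …, B_n` of `U^ı(sl_{n+1})`. -/
noncomputable def Bgen (n : ℕ) (i : Fin n) : Ui n :=
  RingQuot.mkAlgHom (RatFunc ℚ) (UiRel n) (FreeAlgebra.ι (RatFunc ℚ) i)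

/-- The words of the form `v_a v_{a+1} ⋯ v_b` : nonempty words with consecutive increasing
letters. -/
def IsSegment {n : ℕ} (l : List (Fin n)) : Prop :=
  l ≠ [] ∧ l.Chain' (fun x y : Fin n => (y : ℕ) = (x : ℕ) + 1)

/-- The subring `ℤ[q, q⁻¹]` of `ℚ(q)`. -/
noncomputable def LaurentInt : Subring (RatFunc ℚ) :=
  Subring.closure {RatFunc.X, (RatFunc.X)⁻¹}

/-- A word `w` is integral if `B_w` is a `ℤ[q,q⁻¹]`-linear combination of the `B_g` with `g` a
good word satisfying `g ≼ w`. -/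
def IsIntegralWord {n : ℕ} {R : Type*} [Ring R] [Algebra (RatFunc ℚ) R]
    (b : Fin n → R) (w : List (Fin n)) : Prop :=
  ∃ (s : Finset (List (Fin n))) (c : List (Fin n) → RatFunc ℚ),
    (∀ g ∈ s, IsGood (RatFunc ℚ) b g ∧ PrecLe g w) ∧ (∀ g ∈ s, c g ∈ LaurentInt) ∧
    Bword b w = ∑ g ∈ s, c g • Bword b g

noncomputable section
namespace UiIC
open RatFunc

/-- The ground field `ℚ(q)`; the variable `q` is `RatFunc.X`. -/
abbrev Kq := RatFunc ℚ

/-! ### A representation on functions of integer sequences -/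

/-- The scalar by which the torus element attached to `B_i` acts on the basis vector `e_x` of the
natural representation: `q⁻¹` on `e_i`, `q` on `e_{i+1}`, and `1` elsewhere. -/
def kap (i x : ℕ) : Kq := if x = i then (X : Kq)⁻¹ else if x = i + 1 then X else 1

/-- The functions on `List ℕ` form a completion of the sum of all tensor powers of the natural
representation, a list being a pure tensor of basis vectors. `slice x` extracts the part of a
function whose first tensor factor is `e_x`. -/
def slice (x : ℕ) : (List ℕ → Kq) →ₗ[Kq] (List ℕ → Kq) where
  toFun f := fun s => f (x :: s)
  map_add' _ _ := rfl
  map_smul' _ _ := rfl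

/-- The action of `B_i` on the first tensor factor alone, which exchanges `e_i` and `e_{i+1}`:
`swapTerm i x f` is the part with first factor `e_x` of the result. -/
def swapTerm (i x : ℕ) : (List ℕ → Kq) →ₗ[Kq] (List ℕ → Kq) :=
  if x = i then slice (i + 1) else if x = i + 1 then slice i else 0

/-- The value at a list of `B_i` applied to a function, by recursion on the tensor factors
according to the coproduct rule `B_i ↦ K_i ⊗ B_i + B_i ⊗ 1`. -/
def opFun (i : ℕ) : List ℕ → (List ℕ → Kq) → Kq
  | [], _ => 0
  | x :: t, f => kap i x * opFun i t (slice x f) + swapTerm i x f t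

theorem opFun_add (i : ℕ) (t : List ℕ) : ∀ f g, opFun i t (f + g) = opFun i t f + opFun i t g := by
  induction t with
  | nil => intro f g; simp [opFun]
  | cons x t ih => intro f g; simp only [opFun, map_add, ih, Pi.add_apply]; ring

theorem opFun_smul (i : ℕ) (t : List ℕ) :
    ∀ (c : Kq) f, opFun i t (c • f) = c * opFun i t f := by
  induction t with
  | nil => intro f g; simp [opFun]
  | cons x t ih => intro f g; simp only [opFun, map_smul, ih, Pi.smul_apply, smul_eq_mul]; ring

/-- The operator by which `B_i` acts on functions on `List ℕ`. `B_i` acts by zero on the empty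
list. -/
def op (i : ℕ) : Module.End Kq (List ℕ → Kq) where
  toFun f := fun t => opFun i t f
  map_add' f g := by funext t; exact opFun_add i t f g
  map_smul' c f := by funext t; exact opFun_smul i t c f

theorem op_nil (i : ℕ) (f) : op i f [] = 0 := rfl

theorem slice_op (i x : ℕ) (f) :
    slice x (op i f) = kap i x • op i (slice x f) + swapTerm i x f := rfl

theorem op_cons (i x : ℕ) (t f) :
    op i f (x :: t) = kap i x * op i (slice x f) t + swapTerm i x f t := rfl

theorem slice_apply (x : ℕ) (f t) : slice x f t = f (x :: t) := rfl

theorem Xne : (X : Kq) ≠ 0 := RatFunc.X_ne_zero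

theorem op_comm (i j : ℕ) (h : i + 1 < j) (t : List ℕ) :
    ∀ f, op i (op j f) t = op j (op i f) t := by
  have hX := Xne
  induction t with
  | nil => intro f; rfl
  | cons x t ih =>
    intro f
    have h1 := ih (slice x f)
    by_cases e1 : x = i
    · subst e1
      have : x ≠ j := by omega
      have : x ≠ j + 1 := by omega
      have : x + 1 ≠ j := by omega
      simp [op_cons, slice_op, kap, swapTerm, *]
    by_cases e2 : x = i + 1
    · subst e2
      have : i + 1 ≠ j := by omega
      have : i ≠ j := by omega
      have : i ≠ j + 1 := by omega
      simp [op_cons, slice_op, kap, swapTerm, *]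
    by_cases e3 : x = j
    · subst e3
      have : x + 1 ≠ i := by omega
      have : x ≠ i := by omega
      simp [op_cons, slice_op, kap, swapTerm, *]
    by_cases e4 : x = j + 1
    · subst e4
      have : j ≠ i := by omega
      have : j ≠ i + 1 := by omega
      simp [op_cons, slice_op, kap, swapTerm, *]
    simp [op_cons, slice_op, kap, swapTerm, *]

/-- The Serre relation of `B_i` with `B_{i+1}` holds by induction on the number of tensor factors;
only a first factor among `e_i`, `e_{i+1}`, `e_{i+2}` contributes new terms. -/
theorem op_serre_up (i : ℕ) (t : List ℕ) :
    ∀ f, op i (op i (op (i + 1) f)) t + op (i + 1) (op i (op i f)) t =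
      (X + X⁻¹) * op i (op (i + 1) (op i f)) t + op (i + 1) f t := by
  have hX := Xne
  induction t with
  | nil => intro f; simp [op_nil]
  | cons x t ih =>
    intro f
    have h1 := ih (slice x f)
    by_cases e1 : x = i
    · subst e1
      have d1 : ∀ k : ℕ, k ≠ k + 1 + 1 := by omega
      have d2 : ∀ k : ℕ, k + 1 + 1 ≠ k := by omega
      simp [op_cons, slice_op, kap, swapTerm, d1, d2]
      field_simp
      field_simp at h1
      linear_combination h1
    by_cases e2 : x = i + 1
    · subst e2
      have d1 : ∀ k : ℕ, k ≠ k + 1 + 1 := by omega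
      have d2 : ∀ k : ℕ, k + 1 + 1 ≠ k := by omega
      simp [op_cons, slice_op, kap, swapTerm, d1, d2]
      field_simp
      field_simp at h1
      linear_combination X ^ 2 * h1
    by_cases e3 : x = i + 1 + 1
    · subst e3
      have d2 : ∀ k : ℕ, k + 1 + 1 ≠ k := by omega
      simp [op_cons, slice_op, kap, swapTerm, d2]
      field_simp
      field_simp at h1
      linear_combination X * h1
    simp [op_cons, slice_op, kap, swapTerm, *]

theorem op_serre_down (i : ℕ) (t : List ℕ) :
    ∀ f, op (i + 1) (op (i + 1) (op i f)) t + op i (op (i + 1) (op (i + 1) f)) t =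
      (X + X⁻¹) * op (i + 1) (op i (op (i + 1) f)) t + op i f t := by
  have hX := Xne
  induction t with
  | nil => intro f; simp [op_nil]
  | cons x t ih =>
    intro f
    have h1 := ih (slice x f)
    by_cases e1 : x = i
    · subst e1
      have d1 : ∀ k : ℕ, k ≠ k + 1 + 1 := by omega
      simp [op_cons, slice_op, kap, swapTerm, d1]
      field_simp
      field_simp at h1
      linear_combination h1
    by_cases e2 : x = i + 1
    · subst e2
      have d1 : ∀ k : ℕ, k ≠ k + 1 + 1 := by omega
      have d2 : ∀ k : ℕ, k + 1 + 1 ≠ k := by omega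
      simp [op_cons, slice_op, kap, swapTerm, d1, d2]
      field_simp
      field_simp at h1
      linear_combination h1
    by_cases e3 : x = i + 1 + 1
    · subst e3
      have d1 : ∀ k : ℕ, k ≠ k + 1 + 1 := by omega
      have d2 : ∀ k : ℕ, k + 1 + 1 ≠ k := by omega
      simp [op_cons, slice_op, kap, swapTerm, d1, d2]
      field_simp
      field_simp at h1
      linear_combination X ^ 2 * h1
    simp [op_cons, slice_op, kap, swapTerm, *]

/-! ### Positivity of matrix coefficients -/

/-- Up to a power of `q`, the element is a polynomial with positive value at `q = 1`. All matrix
coefficients of the representation are zero or of this kind, so they cannot cancel. -/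
def PosQ (x : Kq) : Prop :=
  ∃ (k : ℕ) (p : Polynomial ℚ), X ^ k * x = algebraMap (Polynomial ℚ) Kq p ∧ 0 < p.eval 1

theorem PosQ.ne_zero {x : Kq} (h : PosQ x) : x ≠ 0 := by
  rintro rfl
  obtain ⟨k, p, h1, h2⟩ := h
  rw [mul_zero, eq_comm, map_eq_zero_iff _ (RatFunc.algebraMap_injective ℚ)] at h1
  simp [h1] at h2

theorem PosQ.add {x y : Kq} (hx : PosQ x) (hy : PosQ y) : PosQ (x + y) := by
  obtain ⟨k, p, h1, h2⟩ := hx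
  obtain ⟨l, r, h3, h4⟩ := hy
  refine ⟨k + l, Polynomial.X ^ l * p + Polynomial.X ^ k * r, ?_, ?_⟩
  · rw [map_add, map_mul, map_mul, ← h1, ← h3, map_pow, map_pow, RatFunc.algebraMap_X]
    ring
  · simp; positivity

theorem PosQ.kap_mul {x : Kq} (hx : PosQ x) (i j : ℕ) : PosQ (kap i j * x) := by
  obtain ⟨k, p, h1, h2⟩ := hx
  have hX : (X : Kq) ≠ 0 := RatFunc.X_ne_zero
  unfold kap
  split_ifs
  · refine ⟨k + 1, p, ?_, h2⟩
    rw [← h1]; field_simp; ring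
  · refine ⟨k, Polynomial.X * p, ?_, by simpa⟩
    rw [map_mul, ← h1, RatFunc.algebraMap_X]; ring
  · exact ⟨k, p, by simpa, h2⟩

theorem PosQ.one : PosQ 1 := ⟨0, 1, by simp, by simp⟩

/-- The element is zero or positive in the sense of `PosQ`. -/
def NonnegQ (x : Kq) : Prop := x = 0 ∨ PosQ x

theorem NonnegQ.add {x y : Kq} (hx : NonnegQ x) (hy : NonnegQ y) : NonnegQ (x + y) := by
  rcases hx with rfl | hx
  · simpa using hy
  rcases hy with rfl | hy
  · rw [add_zero]; exact Or.inr hx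
  exact Or.inr (hx.add hy)

theorem NonnegQ.add_ne {x y : Kq} (hx : NonnegQ x) (hy : NonnegQ y) (h : x ≠ 0 ∨ y ≠ 0) :
    x + y ≠ 0 := by
  rcases hx with rfl | hx
  · simpa using h
  rcases hy with rfl | hy
  · simpa using hx.ne_zero
  exact (hx.add hy).ne_zero

theorem NonnegQ.kap_mul {x : Kq} (hx : NonnegQ x) (i j : ℕ) : NonnegQ (kap i j * x) := by
  rcases hx with rfl | hx
  · exact Or.inl (by simp)
  · exact Or.inr (hx.kap_mul i j)

theorem kap_ne_zero (i j : ℕ) : kap i j ≠ 0 := by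
  have hX : (X : Kq) ≠ 0 := RatFunc.X_ne_zero
  unfold kap
  split_ifs <;> simp [hX]

/-! ### Nonvanishing matrix coefficients and lattice paths -/

/-- `Step i t t'` : the list `t'` arises from `t` by changing one entry `i` to `i + 1` or one entry
`i + 1` to `i`. These are the pairs of lists between which `op i` has a nonzero coefficient. -/
inductive Step (i : ℕ) : List ℕ → List ℕ → Prop
  | up (t : List ℕ) : Step i (i :: t) ((i + 1) :: t)
  | down (t : List ℕ) : Step i ((i + 1) :: t) (i :: t)
  | tail (x : ℕ) {t t' : List ℕ} (h : Step i t t') : Step i (x :: t) (x :: t')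

theorem swapTerm_nonneg (i x : ℕ) (f t) (hf : ∀ t, NonnegQ (f t)) : NonnegQ (swapTerm i x f t) := by
  unfold swapTerm
  split_ifs
  · exact hf _
  · exact hf _
  · exact Or.inl rfl

theorem op_nonneg (i : ℕ) (t : List ℕ) : ∀ f, (∀ t, NonnegQ (f t)) → NonnegQ (op i f t) := by
  induction t with
  | nil => intro f _; exact Or.inl rfl
  | cons x t ih =>
    intro f hf
    rw [op_cons]
    exact ((ih _ fun s => hf _).kap_mul i x).add (swapTerm_nonneg i x f t hf)

theorem op_ne_zero (i : ℕ) (t : List ℕ) :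
    ∀ f, op i f t ≠ 0 → ∃ t', Step i t t' ∧ f t' ≠ 0 := by
  induction t with
  | nil => intro f h; exact absurd rfl h
  | cons x t ih =>
    intro f h
    rw [op_cons] at h
    by_cases h1 : op i (slice x f) t = 0
    · rw [h1, mul_zero, zero_add] at h
      unfold swapTerm at h
      split_ifs at h with e1 e2
      · subst e1; exact ⟨_, Step.up t, h⟩
      · subst e2; exact ⟨_, Step.down t, h⟩
      · exact absurd rfl h
    · obtain ⟨t', s, hs⟩ := ih _ h1
      exact ⟨_, Step.tail x s, hs⟩

theorem op_ne_zero_of_step {i : ℕ} {t t' : List ℕ} (s : Step i t t') :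
    ∀ f, (∀ t, NonnegQ (f t)) → f t' ≠ 0 → op i f t ≠ 0 := by
  induction s with
  | up t =>
    intro f hf h
    rw [op_cons]
    refine ((op_nonneg i t _ fun s => hf _).kap_mul _ _).add_ne (swapTerm_nonneg _ _ f t hf) (.inr ?_)
    simpa [swapTerm, slice_apply] using h
  | down t =>
    intro f hf h
    rw [op_cons]
    refine ((op_nonneg i t _ fun s => hf _).kap_mul _ _).add_ne (swapTerm_nonneg _ _ f t hf) (.inr ?_)
    simpa [swapTerm, slice_apply] using h
  | tail x s ih =>
    intro f hf h
    rw [op_cons]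
    refine ((op_nonneg i _ _ fun s => hf _).kap_mul _ _).add_ne (swapTerm_nonneg _ _ f _ hf) (.inl ?_)
    exact mul_ne_zero (kap_ne_zero _ _) (ih _ (fun s => hf _) h)

/-- `Path w t e` : the list `e` is reached from `t` by steps labelled by the successive letters of
`w`. -/
inductive Path : List ℕ → List ℕ → List ℕ → Prop
  | nil (t : List ℕ) : Path [] t t
  | cons {i : ℕ} {w t t' e : List ℕ} (s : Step i t t') (p : Path w t' e) : Path (i :: w) t e

/-- The operator by which `B_w` acts. -/
def opWord (w : List ℕ) : Module.End Kq (List ℕ → Kq) := (w.map op).prod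

theorem opWord_cons (i : ℕ) (w : List ℕ) (f) : opWord (i :: w) f = op i (opWord w f) := by
  simp [opWord]

/-- The indicator function of the list `e`. -/
def delta (e : List ℕ) : List ℕ → Kq := fun t => if t = e then 1 else 0

theorem opWord_nonneg (w e : List ℕ) : ∀ t, NonnegQ (opWord w (delta e) t) := by
  induction w with
  | nil =>
    intro t
    by_cases h : t = e
    · exact Or.inr (by simpa [opWord, delta, h] using PosQ.one)
    · exact Or.inl (by simp [opWord, delta, h])
  | cons i w ih => intro t; rw [opWord_cons]; exact op_nonneg i t _ ih

theorem path_of_ne_zero (w e : List ℕ) : ∀ t, opWord w (delta e) t ≠ 0 → Path w t e := by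
  induction w with
  | nil =>
    intro t h
    by_cases h' : t = e
    · subst h'; exact Path.nil t
    · exact absurd (by simp [opWord, delta, h']) h
  | cons i w ih =>
    intro t h
    rw [opWord_cons] at h
    obtain ⟨t', s, hs⟩ := op_ne_zero _ _ _ h
    exact Path.cons s (ih _ hs)

theorem ne_zero_of_path {w t e : List ℕ} (p : Path w t e) : opWord w (delta e) t ≠ 0 := by
  induction p with
  | nil t => simp [opWord, delta]
  | cons s p ih => rw [opWord_cons]; exact op_ne_zero_of_step s _ (opWord_nonneg _ _) ih

theorem Step.length_eq {i : ℕ} {t t' : List ℕ} (s : Step i t t') : t'.length = t.length := by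
  induction s with
  | up | down => rfl
  | tail x s ih => simp [ih]

theorem Step.sum_le {i : ℕ} {t t' : List ℕ} (s : Step i t t') : t'.sum ≤ t.sum + 1 := by
  induction s with
  | up | down => simp; try omega
  | tail x s ih => simp; omega

theorem Path.sum_le {w t e : List ℕ} (p : Path w t e) : e.sum ≤ t.sum + w.length := by
  induction p with
  | nil => simp
  | cons s p ih => have := s.sum_le; simp; omega

theorem Path.length_eq {w t e : List ℕ} (p : Path w t e) : e.length = t.length := by
  induction p with
  | nil => rfl
  | cons s p ih => rw [ih, s.length_eq]

/-! ### Paths of minimal length as shuffles of segments -/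

/-- `Shuf w S` : the word `w` is a shuffle of the segments `a, a + 1, …, b - 1` for the pairs
`(a, b)` in the multiset `S`. Each letter of `w` removes the first letter of one segment. -/
inductive Shuf : List ℕ → Multiset (ℕ × ℕ) → Prop
  | nil {S : Multiset (ℕ × ℕ)} (h : ∀ p ∈ S, p.1 = p.2) : Shuf [] S
  | cons {a b : ℕ} {w : List ℕ} {S : Multiset (ℕ × ℕ)} (h : Shuf w ((a + 1, b) ::ₘ S)) :
      Shuf (a :: w) ((a, b) ::ₘ S)

theorem Shuf.le {w : List ℕ} {S : Multiset (ℕ × ℕ)} (h : Shuf w S) : ∀ p ∈ S, p.1 ≤ p.2 := by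
  induction h with
  | nil h => intro p hp; exact (h p hp).le
  | cons h ih =>
    intro p hp
    rcases Multiset.mem_cons.1 hp with rfl | hp
    · have := ih _ (Multiset.mem_cons_self _ _); simp at this ⊢; omega
    · exact ih _ (Multiset.mem_cons_of_mem hp)

/-- A step that increases the sum of the entries turns one pair `(i, b)` of current entry and target
entry into `(i + 1, b)`. -/
theorem Step.zip {i : ℕ} {t t' : List ℕ} (s : Step i t t') : t'.sum = t.sum + 1 →
    ∀ e : List ℕ, e.length = t.length → ∃ (b : ℕ) (S : Multiset (ℕ × ℕ)),
      (t.zip e : Multiset (ℕ × ℕ)) = (i, b) ::ₘ S ∧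
      (t'.zip e : Multiset (ℕ × ℕ)) = (i + 1, b) ::ₘ S := by
  induction s with
  | up t =>
    intro _ e he
    cases e with
    | nil => simp at he
    | cons b e => exact ⟨b, (t.zip e : List (ℕ × ℕ)), rfl, rfl⟩
  | down t => intro h; simp at h; omega
  | tail x s ih =>
    intro h e he
    cases e with
    | nil => simp at he
    | cons b e =>
      obtain ⟨c, S, h1, h2⟩ := ih (by simp at h; omega) e (by simpa using he)
      refine ⟨c, (x, b) ::ₘ S, ?_, ?_⟩
      · rw [List.zip_cons_cons, ← Multiset.cons_coe, h1, Multiset.cons_swap]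
      · rw [List.zip_cons_cons, ← Multiset.cons_coe, h2, Multiset.cons_swap]

/-- A path uses at least as many letters as the increase of the sum of the entries. In the case of
equality every step goes up, so the word is a shuffle of the segments from the initial entries to
the final ones. -/
theorem Path.shuf {w t e : List ℕ} (p : Path w t e) (h : e.sum = t.sum + w.length) :
    Shuf w (t.zip e : List (ℕ × ℕ)) := by
  induction p with
  | nil t =>
    refine Shuf.nil fun p hp => ?_
    rw [Multiset.mem_coe, ← List.map_id t, List.zip_map'] at hp
    simp at hp
    obtain ⟨a, -, rfl⟩ := hp
    rfl
  | cons s p ih =>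
    have h1 := s.sum_le
    have h2 := p.sum_le
    simp only [List.length_cons] at h
    obtain ⟨b, S, h3, h4⟩ := s.zip (by omega) _ (by rw [p.length_eq, s.length_eq])
    have := ih (by omega)
    rw [h4] at this
    rw [h3]
    exact Shuf.cons this

/-! ### Concatenations of segments are the largest shuffles -/

theorem append_lt_append_iff (u v w : List ℕ) : u ++ v < u ++ w ↔ v < w := by
  induction u with
  | nil => rfl
  | cons a u ih => simp [ih]

theorem append_le_append_iff (u v w : List ℕ) : u ++ v ≤ u ++ w ↔ v ≤ w := by
  rw [← not_lt, ← not_lt, append_lt_append_iff]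

/-- The segment `a, a + 1, …, b - 1` encoded by the pair `(a, b)`; it is empty if `b ≤ a`. -/
def seg (p : ℕ × ℕ) : List ℕ := List.range' p.1 (p.2 - p.1)

/-- The concatenation of a list of segments. -/
def flat (L : List (ℕ × ℕ)) : List ℕ := L.flatMap seg

/-- The segment `p` is lexicographically at least the segment `r`, both being nonempty. -/
def SegGe (p r : ℕ × ℕ) : Prop := r.1 < p.1 ∨ (r.1 = p.1 ∧ r.2 ≤ p.2)

theorem seg_cons {a b : ℕ} (h : a < b) : seg (a, b) = a :: seg (a + 1, b) := by
  obtain ⟨k, rfl⟩ := Nat.exists_eq_add_of_lt h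
  simp only [seg]
  rw [show a + k + 1 - a = k + 1 by omega, show a + k + 1 - (a + 1) = k by omega,
    List.range'_succ]

theorem seg_split {a b c : ℕ} (h : a ≤ b) (h' : b ≤ c) : seg (a, c) = seg (a, b) ++ seg (b, c) := by
  obtain ⟨k, rfl⟩ := Nat.exists_eq_add_of_le h
  obtain ⟨l, rfl⟩ := Nat.exists_eq_add_of_le h'
  simp only [seg]
  rw [show a + k + l - a = k + l by omega, show a + k - a = k by omega,
    show a + k + l - (a + k) = l by omega, List.range'_append_1]

theorem flat_cons (p : ℕ × ℕ) (L) : flat (p :: L) = seg p ++ flat L := by simp [flat]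

/-- Moving a segment with maximal first letter to the front of a nonincreasing concatenation does
not increase the word. -/
theorem seg_erase_le {a b : ℕ} (hab : a < b) {L : List (ℕ × ℕ)} (h1 : ∀ p ∈ L, p.1 < p.2)
    (h2 : L.Pairwise SegGe) (hm : (a, b) ∈ L) (h3 : ∀ p ∈ L, p.1 ≤ a) :
    seg (a, b) ++ flat (L.erase (a, b)) ≤ flat L := by
  cases L with
  | nil => simp at hm
  | cons p L =>
    obtain ⟨c, d⟩ := p
    by_cases e : (c, d) = (a, b)
    · rw [e, List.erase_cons_head, flat_cons]
    · rw [List.erase_cons_tail (by simpa using e)]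
      have hm' : (a, b) ∈ L := by
        rcases List.mem_cons.1 hm with h | h
        · exact absurd h.symm e
        · exact h
      have h4 := (List.pairwise_cons.1 h2).1 _ hm'
      have h5 := h3 (c, d) (by simp)
      simp only [SegGe] at h4 h5
      have hc : c = a := by omega
      subst hc
      have hbd : b < d := by
        have : b ≠ d := fun h => e (by rw [h])
        omega
      rw [flat_cons, flat_cons]
      nth_rewrite 2 [seg_split hab.le hbd.le]
      rw [List.append_assoc, append_le_append_iff, seg_cons hbd, seg_cons (hab.trans hbd)]
      exact le_of_lt (List.Lex.rel hab)

/-- The nonincreasing concatenation is the lexicographically largest shuffle of a given multiset of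
nonempty segments. -/
theorem Shuf.le_flat {w : List ℕ} {S : Multiset (ℕ × ℕ)} (h : Shuf w S) :
    ∀ L : List (ℕ × ℕ), (∀ p ∈ L, p.1 < p.2) → L.Pairwise SegGe →
      (L : Multiset (ℕ × ℕ)) = S.filter (fun p => p.1 < p.2) → w ≤ flat L := by
  induction h with
  | nil h => intro L _ _ _; exact not_lt.1 (List.not_lt_nil _)
  | @cons a b w S h ih =>
    intro L h1 h2 h3
    have hab : a < b := h.le _ (Multiset.mem_cons_self _ _)
    rw [Multiset.filter_cons_of_pos _ (by exact hab)] at h3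
    have hm : (a, b) ∈ L := by
      rw [← Multiset.mem_coe, h3]; exact Multiset.mem_cons_self _ _
    have hS : ((L.erase (a, b) : List (ℕ × ℕ)) : Multiset (ℕ × ℕ)) =
        S.filter (fun p => p.1 < p.2) := by
      rw [← Multiset.cons_inj_right (a, b), ← h3, Multiset.cons_coe]
      exact (Multiset.coe_eq_coe.2 (List.perm_cons_erase hm)).symm
    by_cases hmax : ∀ p ∈ L, p.1 ≤ a
    · refine le_trans ?_ (seg_erase_le hab h1 h2 hm hmax)
      rw [seg_cons hab, List.cons_append]
      refine (append_le_append_iff [a] w (seg (a + 1, b) ++ flat (L.erase (a, b)))).2 ?_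
      have h1' : ∀ p ∈ L.erase (a, b), p.1 < p.2 := fun p hp => h1 p (List.mem_of_mem_erase hp)
      have h2' : (L.erase (a, b)).Pairwise SegGe := h2.sublist List.erase_sublist
      by_cases hb : a + 1 < b
      · rw [← flat_cons]
        refine ih _ ?_ ?_ ?_
        · intro p hp
          rcases List.mem_cons.1 hp with rfl | hp
          · exact hb
          · exact h1' p hp
        · refine List.pairwise_cons.2 ⟨fun p hp => Or.inl ?_, h2'⟩
          exact Nat.lt_succ_of_le (hmax p (List.mem_of_mem_erase hp))
        · rw [Multiset.filter_cons_of_pos _ (by exact hb), ← Multiset.cons_coe, hS]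
      · have : seg (a + 1, b) = [] := by
          simp only [seg]; rw [show b - (a + 1) = 0 by omega]; rfl
        rw [this, List.nil_append]
        refine ih _ h1' h2' ?_
        rw [Multiset.filter_cons_of_neg _ (by exact hb), hS]
    · push Not at hmax
      obtain ⟨r, hr, hra⟩ := hmax
      cases L with
      | nil => simp at hr
      | cons p L =>
        obtain ⟨c, d⟩ := p
        have hca : a < c := by
          rcases List.mem_cons.1 hr with rfl | hr
          · exact hra
          · have := (List.pairwise_cons.1 h2).1 _ hr
            simp only [SegGe] at this
            omega
        rw [flat_cons, seg_cons (h1 (c, d) (by simp)), List.cons_append]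
        exact le_of_lt (List.Lex.rel hca)

theorem Path.append {w w' t s e : List ℕ} (p : Path w t s) (p' : Path w' s e) :
    Path (w ++ w') t e := by
  induction p with
  | nil => exact p'
  | cons s p ih => exact Path.cons s (ih p')

theorem Path.tail {w t e : List ℕ} (p : Path w t e) (x : ℕ) : Path w (x :: t) (x :: e) := by
  induction p with
  | nil => exact Path.nil _
  | cons s p ih => exact Path.cons (Step.tail x s) ih

theorem path_range' (k : ℕ) (t : List ℕ) : ∀ a, Path (List.range' a k) (a :: t) ((a + k) :: t) := by
  induction k with
  | zero => intro a; exact Path.nil _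
  | succ k ih =>
    intro a
    rw [List.range'_succ]
    refine Path.cons (Step.up t) ?_
    rw [show a + (k + 1) = a + 1 + k by omega]
    exact ih (a + 1)

theorem path_flat (L : List (ℕ × ℕ)) (h : ∀ p ∈ L, p.1 < p.2) :
    Path (flat L) (L.map Prod.fst) (L.map Prod.snd) := by
  induction L with
  | nil => exact Path.nil _
  | cons p L ih =>
    have h1 := h p (by simp)
    rw [flat_cons]
    refine Path.append (path_range' _ _ _) ?_
    rw [show p.1 + (p.2 - p.1) = p.2 by omega]
    exact (ih fun p hp => h p (by simp [hp])).tail _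

theorem sum_flat (L : List (ℕ × ℕ)) (h : ∀ p ∈ L, p.1 < p.2) :
    (L.map Prod.snd).sum = (L.map Prod.fst).sum + (flat L).length := by
  induction L with
  | nil => rfl
  | cons p L ih =>
    have h1 := h p (by simp)
    have := ih fun p hp => h p (by simp [hp])
    rw [flat_cons]
    simp [seg]
    omega

/-- The order `≺` on words, for words with letters in `ℕ`. -/
def PL (x y : List ℕ) : Prop := x.length < y.length ∨ (x.length = y.length ∧ y < x)

/-- A word `≺`-below a nonincreasing concatenation of segments labels no path from the list of
starting points of the segments to the list of their end points. -/
theorem not_path_of_PL {L : List (ℕ × ℕ)} (h1 : ∀ p ∈ L, p.1 < p.2) (h2 : L.Pairwise SegGe)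
    {w : List ℕ} (hw : PL w (flat L)) : ¬ Path w (L.map Prod.fst) (L.map Prod.snd) := by
  intro p
  have h3 := sum_flat L h1
  rcases hw with hw | ⟨hl, hw⟩
  · have := p.sum_le
    omega
  · have h4 := p.shuf (by omega)
    refine absurd (h4.le_flat L h1 h2 ?_) (not_le.2 hw)
    rw [List.zip_map', eq_comm]
    simp only [Prod.mk.eta, List.map_id']
    rw [Multiset.filter_eq_self]
    exact h1

/-! ### Integral reduction of words that are not normal -/

section Reduction

variable {R : Type*} [Ring R]

/-- The product of `β` along a word with letters in `ℕ`. -/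
def nw (β : ℕ → R) (w : List ℕ) : R := (w.map β).prod

theorem nw_append (β : ℕ → R) (u v : List ℕ) : nw β (u ++ v) = nw β u * nw β v := by simp [nw]
theorem nw_cons (β : ℕ → R) (a) (v : List ℕ) : nw β (a :: v) = β a * nw β v := by simp [nw]
theorem nw_nil (β : ℕ → R) : nw β [] = 1 := by simp [nw]
theorem nw_single (β : ℕ → R) (a : ℕ) : nw β [a] = β a := by simp [nw]

variable [Algebra Kq R]

theorem q2_ne_zero : (X + X⁻¹ : Kq) ≠ 0 := by
  simpa [kap] using ((PosQ.one.kap_mul 0 1).add (PosQ.one.kap_mul 0 0)).ne_zero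

/-- If `y` and `u` commute and both satisfy the Serre relation with `x`, then multiplying these
relations by `u` and by `y` on either side gives an integral rewriting rule for `u x y x`. It
requires `d` to be cancelled once. -/
theorem key_identity {d : Kq} (hd : d ≠ 0) {u x y : R}
    (h1 : x * x * y + y * x * x = d • (x * y * x) + y)
    (h2 : x * x * u + u * x * x = d • (x * u * x) + u) (hc : u * y = y * u) :
    u * x * y * x = x * u * x * y - x * y * x * u + y * x * u * x := by
  have hc' : ∀ z, u * (y * z) = y * (u * z) := fun z => by rw [← mul_assoc, hc, mul_assoc]
  have e1 := congrArg (u * ·) h1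
  have e2 := congrArg (· * y) h2
  have e3 := congrArg (y * ·) h2
  have e4 := congrArg (· * u) h1
  simp only [mul_add, add_mul, mul_smul_comm, smul_mul_assoc, mul_assoc, hc, hc'] at e1 e2 e3 e4
  refine smul_right_injective R hd ?_
  simp only [smul_add, smul_sub, mul_assoc]
  rw [← sub_eq_iff_eq_add] at e1 e2 e3 e4
  rw [← e1, ← e2, ← e3, ← e4]
  abel

/-- The elements `β 0, …, β (n - 1)` satisfy the defining relations of `U^ı(sl_{n+1})`. The family
is indexed by `ℕ`, and its members with index `≥ n` are unconstrained. -/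
structure IsUi (n : ℕ) (β : ℕ → R) : Prop where
  comm : ∀ i j, i + 1 < j → j < n → β i * β j = β j * β i
  up : ∀ i, i + 1 < n → β i * β i * β (i + 1) + β (i + 1) * β i * β i =
    (X + X⁻¹ : Kq) • (β i * β (i + 1) * β i) + β (i + 1)
  down : ∀ i, i + 1 < n → β (i + 1) * β (i + 1) * β i + β i * β (i + 1) * β (i + 1) =
    (X + X⁻¹ : Kq) • (β (i + 1) * β i * β (i + 1)) + β i

/-- The `ℤ[q, q⁻¹]`-span of the products of `β` along the words in `S`. -/
def Sp (β : ℕ → R) (S : Set (List ℕ)) : Submodule LaurentInt R := Submodule.span LaurentInt (nw β '' S)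

theorem mem_Sp {β : ℕ → R} {S : Set (List ℕ)} {z : List ℕ} (h : z ∈ S) : nw β z ∈ Sp β S :=
  Submodule.subset_span ⟨z, h, rfl⟩

theorem q2_mem : (X + X⁻¹ : Kq) ∈ LaurentInt :=
  add_mem (Subring.subset_closure (by simp)) (Subring.subset_closure (by simp))

theorem q2_smul_mem {N : Submodule LaurentInt R} {x : R} (h : x ∈ N) : (X + X⁻¹ : Kq) • x ∈ N :=
  N.smul_mem ⟨_, q2_mem⟩ h

theorem Sp_ctx {β : ℕ → R} {S : Set (List ℕ)} {N : Submodule LaurentInt R} {m : R}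
    (hm : m ∈ Sp β S) (x y : List ℕ) (h : ∀ z ∈ S, nw β (x ++ (z ++ y)) ∈ N) :
    nw β x * (m * nw β y) ∈ N := by
  unfold Sp at hm
  induction hm using Submodule.span_induction with
  | mem m hm =>
    obtain ⟨z, hz, rfl⟩ := hm
    simpa [nw_append] using h z hz
  | zero => simp
  | add a b _ _ ha hb => simpa [mul_add, add_mul] using add_mem ha hb
  | smul c a _ ha =>
    have : nw β x * (c • a * nw β y) = c • (nw β x * (a * nw β y)) := by
      rw [Subring.smul_def, Subring.smul_def, smul_mul_assoc, mul_smul_comm]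
    rw [this]
    exact N.smul_mem c ha

/-- The product along `w` is a `ℤ[q, q⁻¹]`-combination of products along words `≺ w`. -/
def Red (β : ℕ → R) (w : List ℕ) : Prop := nw β w ∈ Sp β {u | PL u w}

theorem lt_append_of_lt {u v : List ℕ} (h : u < v) (hl : u.length = v.length) (r s : List ℕ) :
    u ++ r < v ++ s := by
  induction h with
  | nil => simp at hl
  | rel h => exact List.Lex.rel h
  | cons h ih => exact List.Lex.cons (ih (by simpa using hl))

theorem PL.ctx {u v : List ℕ} (h : PL u v) (x y : List ℕ) :
    PL (x ++ (u ++ y)) (x ++ (v ++ y)) := by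
  rcases h with h | ⟨h1, h2⟩
  · left; simp; omega
  · right
    refine ⟨by simp [h1], (append_lt_append_iff _ _ _).2 (lt_append_of_lt h2 h1.symm _ _)⟩

theorem Red.ctx {β : ℕ → R} {w : List ℕ} (h : Red β w) (x y : List ℕ) :
    Red β (x ++ (w ++ y)) := by
  unfold Red
  rw [nw_append, nw_append]
  exact Sp_ctx h x y fun z hz => mem_Sp (PL.ctx hz x y)

variable {n : ℕ} {β : ℕ → R}

theorem nw_comm (hβ : IsUi n β) {y : ℕ} (hy : y < n) {s : List ℕ}
    (hs : ∀ c ∈ s, c + 1 < y ∨ (y + 1 < c ∧ c < n)) : nw β s * β y = β y * nw β s := by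
  induction s with
  | nil => simp [nw]
  | cons c s ih =>
    rw [nw_cons, mul_assoc, ih fun c hc => hs c (by simp [hc]), ← mul_assoc, ← mul_assoc]
    congr 1
    rcases hs c (by simp) with h | ⟨h, h'⟩
    · exact hβ.comm _ _ h hy
    · exact (hβ.comm _ _ h h').symm

theorem red_comm (hβ : IsUi n β) {i j : ℕ} (h : i + 1 < j) (hj : j < n) : Red β [i, j] := by
  have : nw β [i, j] = nw β [j, i] := by simp [nw, hβ.comm i j h hj]
  unfold Red
  rw [this]
  refine mem_Sp (Or.inr ⟨rfl, List.Lex.rel (by omega)⟩)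

theorem mem_rng {a k c : ℕ} (h : c ∈ List.range' a k) : a ≤ c ∧ c < a + k := by
  simpa [List.mem_range'_1] using h

/-- The product along the segment `a, …, a + k - 1` satisfies the Serre relation with the next
generator `β (a + k)`, because all letters but the last commute with it. -/
theorem seg_serre (hβ : IsUi n β) {a k : ℕ} (hk : 1 ≤ k) (hn : a + k < n) :
    β (a + k) * β (a + k) * nw β (List.range' a k) + nw β (List.range' a k) * β (a + k) * β (a + k)
      = (X + X⁻¹ : Kq) • (β (a + k) * nw β (List.range' a k) * β (a + k)) +
        nw β (List.range' a k) := by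
  obtain ⟨k, rfl⟩ := Nat.exists_eq_add_of_le' hk
  rw [List.range'_1_concat, nw_append, nw_single]
  have hc : nw β (List.range' a k) * β (a + (k + 1)) = β (a + (k + 1)) * nw β (List.range' a k) :=
    nw_comm hβ hn fun c hc => by have := mem_rng hc; omega
  have hc' : ∀ z, β (a + (k + 1)) * (nw β (List.range' a k) * z) =
      nw β (List.range' a k) * (β (a + (k + 1)) * z) := fun z => by
    rw [← mul_assoc, ← hc, mul_assoc]
  have := congrArg (nw β (List.range' a k) * ·) (hβ.down (a + k) hn)
  simp only [mul_add, mul_smul_comm, mul_assoc, hc'] at this ⊢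
  exact this

/-- The words allowed in the reduction of the product of the segments `a, …, a + k - 1` and
`a, …, a + k`: shorter words, words of the same length that exceed the longer segment whatever is
appended to both, and words that start with the longer segment and continue with a word `s` in
letters smaller than `a + k`. The bound on the letters of `s` lets the induction in `seg_pair`
move `β (a + k + 1)` past `s`. -/
def ZSet (a k : ℕ) : Set (List ℕ) :=
  {z | z.length < 2 * k + 1 ∨ (z.length = 2 * k + 1 ∧
    ((∀ r r', List.range' a (k + 1) ++ r < z ++ r') ∨
      ∃ s, z = List.range' a (k + 1) ++ s ∧ List.range' a k ≤ s ∧ ∀ c ∈ s, c < a + k))}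

/-- Induction on `k`: `key_identity` with `u` the segment `a, …, a + k - 1`, `x = β (a + k)` and
`y = β (a + k + 1)` expresses the pair of length `k + 1` through the pair of length `k`. -/
theorem seg_pair (hβ : IsUi n β) (a k : ℕ) (hk : 1 ≤ k) : a + k < n →
    nw β (List.range' a k ++ List.range' a (k + 1)) ∈ Sp β (ZSet a k) := by
  induction k, hk using Nat.le_induction with
  | base =>
    intro hn
    have e : nw β (List.range' a 1 ++ List.range' a (1 + 1)) =
        (X + X⁻¹ : Kq) • nw β [a, a + 1, a] + nw β [a + 1] - nw β [a + 1, a, a] := by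
      rw [eq_sub_iff_add_eq]
      have := hβ.up a hn
      simpa [nw, List.range', mul_assoc] using this
    rw [e]
    refine sub_mem (add_mem (q2_smul_mem (mem_Sp ?_)) (mem_Sp ?_)) (mem_Sp ?_)
    · refine Or.inr ⟨rfl, Or.inr ⟨[a], rfl, le_rfl, by simp⟩⟩
    · exact Or.inl (by simp)
    · refine Or.inr ⟨rfl, Or.inl fun r r' => List.Lex.rel (by omega)⟩
  | succ k hk ih =>
    intro hn
    have hx := ih (by omega)
    have hR1 : List.range' a (k + 1) = List.range' a k ++ [a + k] := List.range'_1_concat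
    have hR2 : List.range' a (k + 1 + 1) = List.range' a k ++ [a + k] ++ [a + k + 1] := by
      rw [List.range'_1_concat, hR1]; rfl
    have huy : nw β (List.range' a k) * β (a + k + 1) = β (a + k + 1) * nw β (List.range' a k) :=
      nw_comm hβ hn fun c hc => by have := mem_rng hc; omega
    have key := key_identity q2_ne_zero (hβ.up (a + k) hn) (seg_serre hβ hk (by omega)) huy
    have e : nw β (List.range' a (k + 1) ++ List.range' a (k + 1 + 1)) =
        nw β [] * (nw β (List.range' a k ++ List.range' a (k + 1)) * nw β [a + k + 1, a + k]) +
        nw β (List.range' a (k + 1 + 1) ++ ((a + k) :: List.range' a k)) -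
        nw β ((a + k + 1) :: (List.range' a (k + 1) ++ List.range' a (k + 1))) := by
      rw [hR2, hR1]
      have k2 := congrArg (nw β (List.range' a k) * ·) key
      simp only [nw_append, nw_cons, nw_nil, mul_one, one_mul, mul_assoc, mul_add, mul_sub] at k2 ⊢
      have huy' : ∀ z, nw β (List.range' a k) * (β (a + k + 1) * z) =
          β (a + k + 1) * (nw β (List.range' a k) * z) := fun z => by
        rw [← mul_assoc, huy, mul_assoc]
      rw [k2, huy' (β (a + k) * (nw β (List.range' a k) * β (a + k)))]
      abel
    rw [e]
    refine sub_mem (add_mem (Sp_ctx hx _ _ ?_) (mem_Sp ?_)) (mem_Sp ?_)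
    · rintro z (hz | ⟨hl, hz | ⟨s, rfl, hs, hs'⟩⟩)
      · exact mem_Sp (Or.inl (by simp; omega))
      · refine mem_Sp (Or.inr ⟨by simp; omega, Or.inl fun r r' => ?_⟩)
        rw [List.range'_1_concat, List.append_assoc, List.nil_append, List.append_assoc]
        exact hz _ _
      · have hsl : s.length = k := by simp at hl; omega
        have : nw β ([] ++ (List.range' a (k + 1) ++ s ++ [a + k + 1, a + k])) =
            nw β (List.range' a (k + 1 + 1) ++ (s ++ [a + k])) := by
          have hsy : nw β s * β (a + k + 1) = β (a + k + 1) * nw β s :=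
            nw_comm hβ hn fun c hc => by have := hs' c hc; omega
          rw [hR2, hR1]
          simp only [nw_append, nw_cons, nw_nil, mul_one, one_mul, mul_assoc]
          rw [← mul_assoc (nw β s), hsy, mul_assoc]
        rw [this]
        refine mem_Sp (Or.inr ⟨by simp; omega, Or.inr ⟨_, rfl, ?_, ?_⟩⟩)
        · rw [hR1]
          rcases hs.lt_or_eq with h | h
          · exact (lt_append_of_lt h (by simp [hsl]) _ _).le
          · rw [h]
        · intro c hc
          rcases List.mem_append.1 hc with h | h
          · have := hs' c h; omega
          · simp at h; omega
    · refine Or.inr ⟨by simp; omega, Or.inr ⟨_, rfl, ?_, ?_⟩⟩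
      · rw [List.range'_succ]
        exact le_of_lt (List.Lex.rel (by omega))
      · intro c hc
        rcases List.mem_cons.1 hc with h | h
        · omega
        · have := mem_rng h; omega
    · refine Or.inr ⟨by simp; omega, Or.inl fun r r' => ?_⟩
      rw [List.range'_succ]
      exact List.Lex.rel (by omega)

theorem red_pair (hβ : IsUi n β) {a k : ℕ} (hk : 1 ≤ k) (hn : a + k < n) :
    Red β (List.range' a k ++ List.range' a (k + 1)) := by
  have h := seg_pair hβ a k hk hn
  refine (Submodule.span_mono (Set.image_mono ?_) : Sp β _ ≤ Sp β _) h
  have hlt : ∀ r r', List.range' a k ++ List.range' a (k + 1) ++ r <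
      List.range' a (k + 1) ++ r' := by
    intro r r'
    rw [List.range'_1_concat (n := k), List.append_assoc, List.append_assoc,
      List.append_assoc (List.range' a k) [a + k] r', append_lt_append_iff]
    obtain ⟨k, rfl⟩ := Nat.exists_eq_add_of_le' hk
    rw [List.range'_succ]
    exact List.Lex.rel (by omega)
  rintro z (hz | ⟨hl, hz | ⟨s, rfl, -, -⟩⟩)
  · exact Or.inl (by simp; omega)
  · refine Or.inr ⟨by simp; omega, ?_⟩
    refine lt_trans (b := List.range' a (k + 1)) (by simpa using hlt [] []) ?_
    simpa using hz [] []
  · exact Or.inr ⟨by simp at hl ⊢; omega, by simpa using hlt [] s⟩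

/-- The word `a, a + 1, …, a + k + 1, a + 1` is reducible: a Serre relation if `k = 0`, and otherwise
`key_identity` applied to its letters `a, a + 1, a + 2` and the last one, which commutes with the
letters in between. -/
theorem red_back (hβ : IsUi n β) {a k : ℕ} (hn : a + k + 1 < n) :
    Red β (List.range' a (k + 2) ++ [a + 1]) := by
  cases k with
  | zero =>
    have e : nw β (List.range' a (0 + 2) ++ [a + 1]) =
        (X + X⁻¹ : Kq) • nw β [a + 1, a, a + 1] + nw β [a] - nw β [a + 1, a + 1, a] := by
      rw [eq_sub_iff_add_eq, add_comm]
      have := hβ.down a hn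
      simpa [nw, List.range', mul_assoc] using this
    unfold Red
    rw [e]
    refine sub_mem (add_mem (q2_smul_mem (mem_Sp ?_)) (mem_Sp ?_)) (mem_Sp ?_)
    · exact Or.inr ⟨rfl, List.Lex.rel (by omega)⟩
    · exact Or.inl (by simp)
    · exact Or.inr ⟨rfl, List.Lex.rel (by omega)⟩
  | succ k =>
    have key := key_identity q2_ne_zero (hβ.up (a + 1) (by omega)) (hβ.down a (by omega))
      (hβ.comm a (a + 1 + 1) (by omega) (by omega))
    have hc : nw β (List.range' (a + 3) k) * β (a + 1) = β (a + 1) * nw β (List.range' (a + 3) k) :=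
      nw_comm hβ (by omega) fun c hc => by have := mem_rng hc; omega
    have hr : List.range' a (k + 1 + 2) = a :: (a + 1) :: (a + 1 + 1) :: List.range' (a + 3) k := by
      rw [List.range'_succ, List.range'_succ, List.range'_succ]
    have e : nw β (List.range' a (k + 1 + 2) ++ [a + 1]) =
        nw β ((a + 1) :: a :: (a + 1) :: (a + 2) :: List.range' (a + 3) k)
        - nw β ((a + 1) :: (a + 2) :: (a + 1) :: a :: List.range' (a + 3) k)
        + nw β ((a + 2) :: (a + 1) :: a :: (a + 1) :: List.range' (a + 3) k) := by
      rw [hr]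
      have k2 := congrArg (· * nw β (List.range' (a + 3) k)) key
      simp only [nw_append, nw_cons, nw_nil, mul_one, mul_assoc, add_mul, sub_mul,
        List.cons_append] at k2 ⊢
      rw [hc]
      exact k2
    unfold Red
    rw [e]
    refine add_mem (sub_mem (mem_Sp ?_) (mem_Sp ?_)) (mem_Sp ?_) <;>
    · refine Or.inr ⟨by simp, ?_⟩
      rw [hr]
      exact List.Lex.rel (by omega)

/-- Normal words: lexicographically nonincreasing concatenations of nonempty segments. -/
def IsNormal (w : List ℕ) : Prop :=
  ∃ L : List (ℕ × ℕ), (∀ p ∈ L, p.1 < p.2) ∧ L.Pairwise SegGe ∧ w = flat L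

/-- Induction on the word: prefixing a letter to a normal word either extends or precedes its first
segment so that the result is normal, or creates one of the reducible factors of `red_comm`,
`red_pair` and `red_back`. -/
theorem red_or_normal (hβ : IsUi n β) (w : List ℕ) (hw : ∀ c ∈ w, c < n) :
    Red β w ∨ IsNormal w := by
  induction w with
  | nil => exact Or.inr ⟨[], by simp, by simp, rfl⟩
  | cons i w ih =>
    rcases ih fun c hc => hw c (by simp [hc]) with h | ⟨L, h1, h2, rfl⟩
    · left; simpa using h.ctx [i] []
    have hi : i < n := hw i (by simp)
    have sing : [i] = seg (i, i + 1) := by simp [seg]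
    cases L with
    | nil => exact Or.inr ⟨[(i, i + 1)], by simp, by simp, by simp [flat, seg]⟩
    | cons p L =>
      obtain ⟨a, b⟩ := p
      have hab : a < b := h1 (a, b) (by simp)
      have hL1 : ∀ p ∈ L, p.1 < p.2 := fun p hp => h1 p (by simp [hp])
      obtain ⟨h3, hL2⟩ := List.pairwise_cons.1 h2
      have hbn : b ≤ n := by
        have := hw (b - 1) (by
          simp only [flat_cons, List.mem_cons, List.mem_append, seg, List.mem_range'_1]; omega)
        omega
      rcases lt_trichotomy i a with hia | rfl | hia
      · by_cases hia' : i + 1 < a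
        · left
          have := (red_comm hβ hia' (by omega)).ctx [] (seg (a + 1, b) ++ flat L)
          simpa [flat_cons, seg_cons hab] using this
        · obtain rfl : a = i + 1 := by omega
          rw [flat_cons, ← List.cons_append, ← seg_cons (by omega : i < b), ← flat_cons]
          cases L with
          | nil => exact Or.inr ⟨[(i, b)], by simp; omega, by simp, rfl⟩
          | cons p L =>
            obtain ⟨c, d⟩ := p
            have hcd : c < d := hL1 (c, d) (by simp)
            have h4 := h3 (c, d) (by simp)
            simp only [SegGe] at h4
            by_cases hci : c = i + 1
            · left
              subst hci
              obtain ⟨k, rfl⟩ := Nat.exists_eq_add_of_lt hab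
              have := (red_back (a := i) (k := k) hβ (by omega)).ctx [] (seg (i + 1 + 1, d) ++ flat L)
              rw [flat_cons, flat_cons, seg_cons hcd]
              have e : seg (i, i + 1 + k + 1) = List.range' i (k + 2) := by
                simp only [seg]; congr 1; omega
              rw [e]
              simpa using this
            by_cases hbd : c = i ∧ b < d
            · left
              obtain ⟨rfl, hbd⟩ := hbd
              obtain ⟨k, rfl⟩ := Nat.exists_eq_add_of_lt hab
              have hdn : d ≤ n := by
                have := hw (d - 1) (by
                  simp only [flat_cons, List.mem_cons, List.mem_append, seg, List.mem_range'_1]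
                  omega)
                omega
              have := (red_pair (a := c) (k := k + 2) hβ (by omega) (by omega)).ctx []
                (seg (c + k + 3, d) ++ flat L)
              rw [flat_cons, flat_cons, seg_split (b := c + k + 3) (by omega) (by omega : _ ≤ d)]
              have e : seg (c, c + 1 + k + 1) = List.range' c (k + 2) := by
                simp only [seg]; congr 1; omega
              have e' : seg (c, c + k + 3) = List.range' c (k + 2 + 1) := by
                simp only [seg]; congr 1; omega
              rw [e, e']
              simpa using this
            · right
              have hge : SegGe (i, b) (c, d) := by simp only [SegGe]; omega
              refine ⟨(i, b) :: (c, d) :: L, ?_, ?_, rfl⟩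
              · intro p hp
                rcases List.mem_cons.1 hp with rfl | hp
                · exact (by omega : i < b)
                · exact hL1 p hp
              · refine List.pairwise_cons.2 ⟨fun p hp => ?_, hL2⟩
                rcases List.mem_cons.1 hp with rfl | hp
                · exact hge
                · have := (List.pairwise_cons.1 hL2).1 p hp
                  simp only [SegGe] at this hge ⊢
                  omega
      · by_cases hb : b = i + 1
        · right
          subst hb
          refine ⟨(i, i + 1) :: (i, i + 1) :: L, ?_, ?_, ?_⟩
          · simpa using hL1
          · refine List.pairwise_cons.2 ⟨fun p hp => ?_, h2⟩
            rcases List.mem_cons.1 hp with rfl | hp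
            · exact Or.inr ⟨rfl, le_rfl⟩
            · exact h3 p hp
          · rw [flat_cons _ (_ :: _), ← sing]; rfl
        · left
          have := (red_pair (a := i) (k := 1) hβ le_rfl (by omega)).ctx [] (seg (i + 2, b) ++ flat L)
          rw [flat_cons, seg_cons hab, seg_cons (by omega : i + 1 < b)]
          simpa [List.range'] using this
      · right
        refine ⟨(i, i + 1) :: (a, b) :: L, ?_, ?_, ?_⟩
        · intro p hp
          rcases List.mem_cons.1 hp with rfl | hp
          · exact Nat.lt_succ_self i
          · exact h1 p hp
        · refine List.pairwise_cons.2 ⟨fun p hp => Or.inl ?_, h2⟩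
          rcases List.mem_cons.1 hp with rfl | hp
          · exact hia
          · have := h3 p hp
            simp only [SegGe] at this
            simp only
            omega
        · rw [flat_cons _ (_ :: _), ← sing]; rfl

end Reduction

/-! ### Goodness of normal words and the integral condition -/

section Transfer

variable {n : ℕ}

/-- The generators of `U^ı(sl_{n+1})` as a family indexed by `ℕ`, extended by zero. -/
def bN (n : ℕ) (i : ℕ) : Ui n := if h : i < n then Bgen n ⟨i, h⟩ else 0

theorem bN_val (i : Fin n) : bN n i = Bgen n i := by simp [bN]

theorem Bgen_comm (i j : Fin n) (h : (i : ℕ) + 1 < j) :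
    Bgen n i * Bgen n j = Bgen n j * Bgen n i := by
  simpa only [map_mul, Bgen] using RingQuot.mkAlgHom_rel Kq (UiRel.comm i j h)

theorem Bgen_serre (i j : Fin n) (h : (i : ℕ) + 1 = j ∨ (j : ℕ) + 1 = i) :
    Bgen n i * Bgen n i * Bgen n j + Bgen n j * Bgen n i * Bgen n i =
      (X + X⁻¹ : Kq) • (Bgen n i * Bgen n j * Bgen n i) + Bgen n j := by
  simpa only [map_mul, map_add, map_smul, Bgen] using RingQuot.mkAlgHom_rel Kq (UiRel.serre i j h)

theorem isUi_bN (n : ℕ) : IsUi n (bN n) where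
  comm i j h hj := by
    have := Bgen_comm (n := n) ⟨i, by omega⟩ ⟨j, hj⟩ h
    simpa only [← bN_val] using this
  up i h := by
    have := Bgen_serre (n := n) ⟨i, by omega⟩ ⟨i + 1, h⟩ (Or.inl rfl)
    simpa only [← bN_val] using this
  down i h := by
    have := Bgen_serre (n := n) ⟨i + 1, h⟩ ⟨i, by omega⟩ (Or.inr rfl)
    simpa only [← bN_val] using this

/-- The representation of `U^ı(sl_{n+1})` in which `B_i` acts by `op i`. -/
def rho (n : ℕ) : Ui n →ₐ[Kq] Module.End Kq (List ℕ → Kq) :=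
  RingQuot.liftAlgHom Kq ⟨FreeAlgebra.lift Kq fun i : Fin n => op i, by
    intro x y h
    cases h with
    | comm i j h =>
      simp only [map_mul, FreeAlgebra.lift_ι_apply]
      exact LinearMap.ext fun f => funext fun t => op_comm i j h t f
    | serre i j h =>
      simp only [map_mul, map_add, map_smul, FreeAlgebra.lift_ι_apply]
      refine LinearMap.ext fun f => funext fun t => ?_
      rcases h with h | h
      · rw [← h]; exact op_serre_up i t f
      · rw [← h]; exact op_serre_down j t f⟩

theorem rho_Bword (w : List (Fin n)) : rho n (Bword (Bgen n) w) = opWord (w.map Fin.val) := by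
  unfold Bword opWord
  rw [map_list_prod, List.map_map, List.map_map]
  congr 2
  funext i
  simp [rho, Bgen]

theorem lex_map_val {u w : List (Fin n)} : LexLt u w ↔ u.map Fin.val < w.map Fin.val := by
  unfold LexLt
  constructor
  · intro h
    induction h with
    | nil => exact List.Lex.nil
    | rel h => exact List.Lex.rel h
    | cons h ih => exact List.Lex.cons ih
  · induction u generalizing w with
    | nil =>
      intro h
      cases w with
      | nil => cases h
      | cons b w => exact List.Lex.nil
    | cons a u ih =>
      intro h
      cases w with
      | nil => cases h
      | cons b w =>
        rw [List.map_cons, List.map_cons, List.cons_lt_cons_iff] at h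
        rcases h with h | ⟨h, h'⟩
        · exact List.Lex.rel h
        · rw [Fin.ext h]; exact List.Lex.cons (ih h')

theorem prec_map_val {u w : List (Fin n)} : PrecLt u w ↔ PL (u.map Fin.val) (w.map Fin.val) := by
  simp [PrecLt, PL, lex_map_val]

theorem nw_map_val (w : List (Fin n)) : nw (bN n) (w.map Fin.val) = Bword (Bgen n) w := by
  unfold nw Bword
  rw [List.map_map]
  congr 2
  funext i
  exact bN_val i

theorem nw_eq_zero {u : List ℕ} (h : ∃ c ∈ u, n ≤ c) : nw (bN n) u = 0 := by
  obtain ⟨c, hc, hn⟩ := h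
  refine List.prod_eq_zero (List.mem_map.2 ⟨c, hc, ?_⟩)
  simp [bN, hn]

theorem exists_map_val {u : List ℕ} (h : ∀ c ∈ u, c < n) :
    ∃ v : List (Fin n), v.map Fin.val = u :=
  ⟨u.pmap Fin.mk h, by simp [List.map_pmap]⟩

/-- The matrix coefficient from the starting points to the end points of the segments of `w` is
nonzero on `B_w` and vanishes on `B_u` for all `u ≺ w`. -/
theorem isGood_of_isNormal {w : List (Fin n)} (h : IsNormal (w.map Fin.val)) :
    IsGood Kq (Bgen n) w := by
  obtain ⟨L, h1, h2, hL⟩ := h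
  intro hmem
  let φ : Ui n →ₗ[Kq] Kq := (LinearMap.proj (L.map Prod.fst)).comp
    ((LinearMap.applyₗ (delta (L.map Prod.snd))).comp (rho n).toLinearMap)
  have hφ : ∀ u, φ (Bword (Bgen n) u) =
      opWord (u.map Fin.val) (delta (L.map Prod.snd)) (L.map Prod.fst) := by
    intro u
    rw [← rho_Bword]
    rfl
  have hker : Submodule.span Kq (Bword (Bgen n) '' {u | PrecLt u w}) ≤ LinearMap.ker φ := by
    rw [Submodule.span_le]
    rintro _ ⟨u, hu, rfl⟩
    rw [SetLike.mem_coe, LinearMap.mem_ker, hφ]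
    by_contra hne
    refine not_path_of_PL h1 h2 ?_ (path_of_ne_zero _ _ _ hne)
    rw [← hL]
    exact prec_map_val.1 hu
  have h0 := LinearMap.mem_ker.1 (hker hmem)
  rw [hφ, hL] at h0
  exact ne_zero_of_path (path_flat L h1) h0

theorem Bword_mem_of_red {w : List (Fin n)} (h : Red (bN n) (w.map Fin.val)) :
    Bword (Bgen n) w ∈ Submodule.span LaurentInt (Bword (Bgen n) '' {u | PrecLt u w}) := by
  unfold Red at h
  rw [nw_map_val] at h
  refine (Submodule.span_le.2 ?_ : Sp (bN n) _ ≤ _) h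
  rintro _ ⟨u, hu, rfl⟩
  by_cases hn : ∀ c ∈ u, c < n
  · obtain ⟨v, rfl⟩ := exists_map_val hn
    rw [nw_map_val]
    exact Submodule.subset_span ⟨v, prec_map_val.2 hu, rfl⟩
  · push Not at hn
    rw [nw_eq_zero hn]
    exact zero_mem _

theorem PL.trans {u v w : List ℕ} (h : PL u v) (h' : PL v w) : PL u w := by
  rcases h with h | ⟨h, k⟩ <;> rcases h' with h' | ⟨h', k'⟩
  · exact Or.inl (by omega)
  · exact Or.inl (by omega)
  · exact Or.inl (by omega)
  · exact Or.inr ⟨by omega, k'.trans k⟩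

theorem PL.irrefl (w : List ℕ) : ¬ PL w w := by
  rintro (h | ⟨-, h⟩)
  · exact lt_irrefl _ h
  · exact lt_irrefl _ h

theorem prec_trans {u v w : List (Fin n)} (h : PrecLt u v) (h' : PrecLt v w) : PrecLt u w :=
  prec_map_val.2 ((prec_map_val.1 h).trans (prec_map_val.1 h'))

theorem prec_finite (w : List (Fin n)) : {u | PrecLt u w}.Finite := by
  refine (List.finite_length_le (Fin n) w.length).subset ?_
  rintro u (h | ⟨h, -⟩)
  · exact h.le
  · exact h.le

/-- Words are finite in number below any given word, which makes `≺` well-founded. -/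
theorem ncard_lt {u w : List (Fin n)} (h : PrecLt u w) :
    {x | PrecLt x u}.ncard < {x | PrecLt x w}.ncard := by
  refine Set.ncard_lt_ncard ⟨fun x hx => prec_trans hx h, fun hsub => ?_⟩ (prec_finite w)
  exact PL.irrefl _ (prec_map_val.1 (hsub h))

theorem Bword_mem_span_good (w : List (Fin n)) : Bword (Bgen n) w ∈ Submodule.span LaurentInt
    (Bword (Bgen n) '' {g | IsGood Kq (Bgen n) g ∧ PrecLe g w}) := by
  induction hN : {x | PrecLt x w}.ncard using Nat.strong_induction_on generalizing w with
  | _ N ih =>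
    rcases red_or_normal (isUi_bN n) (w.map Fin.val) (by simp) with h | h
    · refine Submodule.span_le.2 ?_ (Bword_mem_of_red h)
      rintro _ ⟨u, hu, rfl⟩
      refine Submodule.span_mono (Set.image_mono ?_) (ih _ (hN ▸ ncard_lt hu) u rfl)
      rintro g ⟨hg, hgu | rfl⟩
      · exact ⟨hg, Or.inl (prec_trans hgu hu)⟩
      · exact ⟨hg, Or.inl hu⟩
    · exact Submodule.subset_span ⟨w, ⟨isGood_of_isNormal h, Or.inr rfl⟩, rfl⟩

end Transfer

end UiIC
end

/-- The split ıquantum group `U^ı(sl_{n+1})` satisfies the integral condition (IC) : every word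
is integral. -/
theorem Ui_satisfies_IC {n : ℕ} (w : List (Fin n)) : IsIntegralWord (Bgen n) w := by
  obtain ⟨l, hl, hw⟩ := (Finsupp.mem_span_image_iff_linearCombination LaurentInt).1
    (UiIC.Bword_mem_span_good w)
  refine ⟨l.support, fun g => (l g : RatFunc ℚ), fun g hg => hl hg, fun g _ => (l g).2, ?_⟩
  rw [← hw, Finsupp.linearCombination_apply, Finsupp.sum]
  rfl
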